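/- arXiv:1502.05459 — 6 statements merged into one kernel-verified Lean document; each statement's English description precedes it below -/
import Mathlib

section
/- For all real numbers z₀ > z₁ > z₂ > z₃ > z₄, one has ∑_{j=0}^{4} (−1)^j · L₂( CR(z₀, …, ẑ_j, …, z₄) ) = 0, where ẑ_j means that z_j is omitted and the remaining four numbers are taken in their given (decreasing) order; each of the five cross-ratios lies in (0,1), so every term is defined. -/
/-!
Move `z0` down to `z1` with the other points fixed. In logarithmic form the Rogers dilogarithm
satisfies `d L2(f) = (1/2) (log (1-f) d log f - log f d log (1-f))`, and for a cross-ratio both `f`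
and `1 - f` are quotients of products of differences (the latter by the Plücker relation). The
derivative of the five-term sum in `z0` is thus bilinear in the logarithms `log (zi - zj)` and the
reciprocals `1 / (z0 - zj)`, and it cancels identically (see `hasDerivAt_L2_CR`). The sum is therefore
constant on `z0 > z1`. Since `L2` is continuous on `(0, 1]` (`continuousOn_L2`), the constant is
the value at `z0 = z1`, where three of the cross-ratios are `1`, with `L2 1 = 0`, and the other two
coincide and cancel.
-/

open scoped Real

/-- The real dilogarithm `Li₂(x) := −∫₀ˣ log(1−t)/t dt`, for `x ∈ (−∞, 1]`. -/
noncomputable def Li2 (x : ℝ) : ℝ := -∫ t in (0:ℝ)..x, Real.log (1 - t) / t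

/-- The Rogers-type dilogarithm `L₂(z) := Li₂(1) − Li₂(z) − (1/2)·log(z)·log(1−z)`. -/
noncomputable def L2 (z : ℝ) : ℝ :=
  Li2 1 - Li2 z - (1/2) * Real.log z * Real.log (1 - z)

/-- The cross-ratio of four distinct reals. -/
noncomputable def CR (t0 t1 t2 t3 : ℝ) : ℝ :=
  ((t0 - t3) * (t1 - t2)) / ((t0 - t2) * (t1 - t3))

open Set MeasureTheory intervalIntegral

lemma intervalIntegrable_log_one_sub_div :
    IntervalIntegrable (fun t : ℝ => Real.log (1 - t) / t) volume 0 1 := by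
  have h1 : IntervalIntegrable (fun t : ℝ => Real.log (1 - t) / t) volume 0 (1/2) := by
    have hc : ContinuousOn (dslope (fun t : ℝ => Real.log (1 - t)) 0) (uIcc 0 (1/2)) := by
      rw [uIcc_of_le (by norm_num)]
      intro t ht
      have hd : DifferentiableAt ℝ (fun t : ℝ => Real.log (1 - t)) t :=
        DifferentiableAt.log (by fun_prop) (by linarith [ht.2])
      by_cases h : t = 0
      · subst h
        exact (continuousAt_dslope_same.2 hd).continuousWithinAt
      · exact ((continuousAt_dslope_of_ne h).2 hd.continuousAt).continuousWithinAt
    refine hc.intervalIntegrable.congr ?_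
    intro t ht
    rw [uIoc_of_le (by norm_num)] at ht
    simp [dslope_of_ne _ ht.1.ne', slope_def_field]
  have h2 : IntervalIntegrable (fun t : ℝ => Real.log (1 - t) / t) volume (1/2) 1 := by
    have hl : IntervalIntegrable (fun t : ℝ => Real.log (1 - t)) volume (1/2) 1 := by
      have := (intervalIntegrable_log' (a := 1/2) (b := 0)).comp_sub_left 1
      norm_num at this
      norm_num
      exact this
    have hi : ContinuousOn (fun t : ℝ => t⁻¹) (uIcc (1/2) 1) := by
      rw [uIcc_of_le (by norm_num)]
      exact continuousOn_id.inv₀ fun t ht => by have := ht.1; simp; linarith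
    exact hl.mul_continuousOn hi
  exact h1.trans h2

lemma hasDerivAt_Li2 {z : ℝ} (h0 : 0 < z) (h1 : z < 1) :
    HasDerivAt Li2 (-(Real.log (1 - z) / z)) z := by
  have hc : ∀ t ∈ Ioo (0:ℝ) 1, ContinuousAt (fun t : ℝ => Real.log (1 - t) / t) t := fun t ht =>
    ContinuousAt.div (ContinuousAt.log (by fun_prop) (by linarith [ht.2])) continuousAt_id ht.1.ne'
  refine (integral_hasDerivAt_right ?_ ?_ (hc z ⟨h0, h1⟩)).neg
  · refine intervalIntegrable_log_one_sub_div.mono_set ?_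
    rw [uIcc_of_le h0.le, uIcc_of_le zero_le_one]
    exact Icc_subset_Icc_right h1.le
  · exact ContinuousAt.stronglyMeasurableAtFilter isOpen_Ioo hc z ⟨h0, h1⟩

lemma hasDerivAt_L2 {z : ℝ} (h0 : 0 < z) (h1 : z < 1) :
    HasDerivAt L2 (1/2 * (Real.log (1 - z) / z + Real.log z / (1 - z))) z := by
  have hl := (Real.hasDerivAt_log h0.ne').const_mul (1/2 : ℝ)
  have hl' := ((hasDerivAt_id z).const_sub 1).log (by simp; linarith)
  have h := ((hasDerivAt_Li2 h0 h1).const_sub (Li2 1)).sub (hl.mul hl')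
  refine h.congr_deriv ?_
  have : 1 - z ≠ 0 := by linarith
  simp only [id]
  field_simp
  ring

/-- At the endpoint `1` the logarithmic term is `log z = O(1 - z)` times `log (1 - z)`, so it is
controlled by the continuous function `x log x` at `0`. -/
lemma continuousOn_L2 : ContinuousOn L2 (Ioc 0 1) := by
  have hLi : ContinuousOn Li2 (Ioc 0 1) := by
    have h := continuousOn_primitive_interval'
      intervalIntegrable_log_one_sub_div (left_mem_uIcc)
    rw [uIcc_of_le zero_le_one] at h
    exact (h.mono Ioc_subset_Icc_self).neg
  have hd : ContinuousOn (dslope Real.log 1) (Ioc 0 1) := by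
    intro t ht
    have hd := Real.differentiableAt_log ht.1.ne'
    by_cases h : t = 1
    · subst h
      exact (continuousAt_dslope_same.2 hd).continuousWithinAt
    · exact ((continuousAt_dslope_of_ne h).2 hd.continuousAt).continuousWithinAt
  have hm : Continuous fun z : ℝ => (1 - z) * Real.log (1 - z) :=
    Real.continuous_mul_log.comp (continuous_const.sub continuous_id)
  refine ((continuousOn_const (c := Li2 1)).sub hLi |>.add
    ((hd.mul hm.continuousOn).const_mul (1/2))).congr fun z _ => ?_
  have h := sub_smul_dslope Real.log 1 z
  simp only [smul_eq_mul, Real.log_one, sub_zero] at h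
  simp only [L2, ← h, Pi.sub_apply, Pi.add_apply, Pi.mul_apply]
  ring

lemma L2_one : L2 1 = 0 := by simp [L2]

lemma one_sub_CR {t0 t1 t2 t3 : ℝ} (h02 : t2 < t0) (h13 : t3 < t1) :
    1 - CR t0 t1 t2 t3 = ((t0 - t1) * (t2 - t3)) / ((t0 - t2) * (t1 - t3)) := by
  have : t0 - t2 ≠ 0 := by linarith
  have : t1 - t3 ≠ 0 := by linarith
  rw [CR]
  field_simp
  ring

lemma CR_mem_Ioc {t0 t1 t2 t3 : ℝ} (h01 : t1 ≤ t0) (h12 : t2 < t1) (h23 : t3 < t2) :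
    CR t0 t1 t2 t3 ∈ Ioc 0 1 := by
  have a := sub_nonneg.2 h01
  have b := sub_pos.2 h12
  have c := sub_pos.2 h23
  have d : 0 < t0 - t2 := by linarith
  have e : 0 < t1 - t3 := by linarith
  have f : 0 < t0 - t3 := by linarith
  refine ⟨by unfold CR; positivity, ?_⟩
  rw [← sub_nonneg, one_sub_CR (by linarith) (by linarith)]
  positivity

/-- At coinciding first arguments the cross-ratio degenerates to `1`. -/
lemma CR_self {t1 t2 t3 : ℝ} (h12 : t2 < t1) (h23 : t3 < t2) : CR t1 t1 t2 t3 = 1 := by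
  have : t1 - t2 ≠ 0 := by linarith
  have : t1 - t3 ≠ 0 := by linarith
  rw [CR]
  field_simp

lemma continuousOn_L2_CR {a t1 t2 t3 : ℝ} (ha : t1 ≤ a) (h12 : t2 < t1) (h23 : t3 < t2) :
    ContinuousOn (fun x => L2 (CR x t1 t2 t3)) (Ici a) := by
  refine continuousOn_L2.comp (t := Ioc 0 1) ?_ fun x hx => CR_mem_Ioc (ha.trans hx) h12 h23
  unfold CR
  refine ContinuousOn.div (by fun_prop) (by fun_prop) fun x hx => ?_
  have hx' : a ≤ x := hx
  exact mul_ne_zero (by linarith) (by linarith)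

/-- The derivative of `L2` of a cross-ratio in its first argument, expanded as
`(1/2) (log (1-f) d log f - log f d log (1-f))` in logarithms of differences. -/
lemma hasDerivAt_L2_CR {x t1 t2 t3 : ℝ} (h01 : t1 < x) (h12 : t2 < t1) (h23 : t3 < t2) :
    HasDerivAt (fun x => L2 (CR x t1 t2 t3))
      (1/2 * ((Real.log (x - t1) + Real.log (t2 - t3) - Real.log (x - t2) - Real.log (t1 - t3))
          * ((x - t3)⁻¹ - (x - t2)⁻¹)
        - (Real.log (x - t3) + Real.log (t1 - t2) - Real.log (x - t2) - Real.log (t1 - t3))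
          * ((x - t1)⁻¹ - (x - t2)⁻¹))) x := by
  have n1 : x - t1 ≠ 0 := by linarith
  have n2 : x - t2 ≠ 0 := by linarith
  have n3 : x - t3 ≠ 0 := by linarith
  have n12 : t1 - t2 ≠ 0 := by linarith
  have n13 : t1 - t3 ≠ 0 := by linarith
  have n23 : t2 - t3 ≠ 0 := by linarith
  have e1 := one_sub_CR (t0 := x) (t1 := t1) (t2 := t2) (t3 := t3) (by linarith) (by linarith)
  have hpos := (CR_mem_Ioc h01.le h12 h23).1
  have hlt : CR x t1 t2 t3 < 1 := by
    have := sub_pos.2 h01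
    have := sub_pos.2 h23
    have : 0 < x - t2 := by linarith
    have : 0 < t1 - t3 := by linarith
    rw [← sub_pos, e1]
    positivity
  have hCR : HasDerivAt (fun x => CR x t1 t2 t3)
      (CR x t1 t2 t3 * ((x - t3)⁻¹ - (x - t2)⁻¹)) x := by
    have h := (((hasDerivAt_id x).sub_const t3).mul_const (t1 - t2)).div
      (((hasDerivAt_id x).sub_const t2).mul_const (t1 - t3)) (mul_ne_zero n2 n13)
    refine h.congr_deriv ?_
    simp only [CR, id]
    field_simp
  refine ((hasDerivAt_L2 hpos hlt).comp x hCR).congr_deriv ?_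
  have l1 : Real.log (1 - CR x t1 t2 t3) = Real.log (x - t1) + Real.log (t2 - t3)
      - Real.log (x - t2) - Real.log (t1 - t3) := by
    rw [e1, Real.log_div (mul_ne_zero n1 n23) (mul_ne_zero n2 n13), Real.log_mul n1 n23,
      Real.log_mul n2 n13]
    ring
  have l2 : Real.log (CR x t1 t2 t3) = Real.log (x - t3) + Real.log (t1 - t2)
      - Real.log (x - t2) - Real.log (t1 - t3) := by
    rw [CR, Real.log_div (mul_ne_zero n3 n12) (mul_ne_zero n2 n13), Real.log_mul n3 n12,
      Real.log_mul n2 n13]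
    ring
  -- the logarithmic derivative of `1 - f`, with its numerator written as minus the derivative of `f`
  have d : CR x t1 t2 t3 * ((x - t3)⁻¹ - (x - t2)⁻¹) / (1 - CR x t1 t2 t3)
      = -((x - t1)⁻¹ - (x - t2)⁻¹) := by
    rw [e1, CR]
    field_simp
    ring
  rw [← l1, ← l2]
  have hne := hpos.ne'
  calc _ = 1/2 * (Real.log (1 - CR x t1 t2 t3) * ((x - t3)⁻¹ - (x - t2)⁻¹)
        * (CR x t1 t2 t3 / CR x t1 t2 t3) + Real.log (CR x t1 t2 t3) *
        (CR x t1 t2 t3 * ((x - t3)⁻¹ - (x - t2)⁻¹) / (1 - CR x t1 t2 t3))) := by ring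
    _ = _ := by rw [d, div_self hne]; ring

/-- Five-term relation for the Rogers dilogarithm in cross-ratio form:
for `z₀ > z₁ > z₂ > z₃ > z₄` one has
`∑_{j=0}^{4} (−1)^j · L₂(CR(z₀, …, ẑ_j, …, z₄)) = 0`. -/
theorem fiveTerm_Rogers_crossRatio (z0 z1 z2 z3 z4 : ℝ)
    (h01 : z1 < z0) (h12 : z2 < z1) (h23 : z3 < z2) (h34 : z4 < z3) :
    L2 (CR z1 z2 z3 z4) - L2 (CR z0 z2 z3 z4) + L2 (CR z0 z1 z3 z4)
      - L2 (CR z0 z1 z2 z4) + L2 (CR z0 z1 z2 z3) = 0 := by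
  set F : ℝ → ℝ := fun x => L2 (CR z1 z2 z3 z4) - L2 (CR x z2 z3 z4) + L2 (CR x z1 z3 z4)
      - L2 (CR x z1 z2 z4) + L2 (CR x z1 z2 z3) with hF
  have hcont : ContinuousOn F (Icc z1 z0) := by
    refine ContinuousOn.mono ?_ (Icc_subset_Ici_self)
    exact (((continuousOn_const.sub (continuousOn_L2_CR h12.le h23 h34)).add
      (continuousOn_L2_CR le_rfl (h23.trans h12) h34)).sub
      (continuousOn_L2_CR le_rfl h12 (h34.trans h23))).add (continuousOn_L2_CR le_rfl h12 h23)
  have hderiv : ∀ x ∈ Ioo z1 z0, HasDerivAt F 0 x := by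
    intro x hx
    have h := ((((hasDerivAt_L2_CR (h12.trans hx.1) h23 h34).const_sub
      (L2 (CR z1 z2 z3 z4))).add (hasDerivAt_L2_CR hx.1 (h23.trans h12) h34)).sub
      (hasDerivAt_L2_CR hx.1 h12 (h34.trans h23))).add (hasDerivAt_L2_CR hx.1 h12 h23)
    exact h.congr_deriv (by ring)
  have hend : F z1 = 0 := by
    simp only [hF, CR_self (h23.trans h12) h34, CR_self h12 (h34.trans h23), CR_self h12 h23,
      L2_one]
    ring
  obtain ⟨c, hc, h⟩ := exists_hasDerivAt_eq_slope F (fun _ => 0) h01 hcont hderiv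
  have hne : z0 - z1 ≠ 0 := by linarith
  have h' : F z0 - F z1 = 0 := by
    rcases div_eq_zero_iff.1 h.symm with h | h
    · exact h
    · exact absurd h hne
  change F z0 = 0
  linarith
end

section
/- For all real numbers a, b, c, d > 0 with a·d < b·c: −∫_{t = a/b}^{c/d} ( log(c) + log(1 − (d/c)·t) ) / t dt = Li₂(1) − Li₂( (a·d)/(b·c) ) + log(c)·log( (a·d)/(b·c) ). (The integral is an oriented interval integral; it is improper but convergent at the upper endpoint t = c/d, where the integrand has a logarithmic singularity, and (a·d)/(b·c) ∈ (0,1).) -/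
theorem intervalIntegrable_log_one_sub_div_left {x : ℝ} (hx0 : 0 < x) (hx1 : x < 1) :
    IntervalIntegrable (fun t : ℝ => Real.log (1 - t) / t) MeasureTheory.volume 0 x := by
  have hd : ∀ t : ℝ, t < 1 → DifferentiableAt ℝ (fun t : ℝ => Real.log (1 - t)) t := fun t ht =>
    ((differentiableAt_const _).sub differentiableAt_id).log (sub_pos.2 ht).ne'
  have hcont : ContinuousOn (dslope (fun t : ℝ => Real.log (1 - t)) 0) (Set.Iio 1) :=
    (continuousOn_dslope (Iio_mem_nhds one_pos)).2
      ⟨fun t ht => (hd t ht).continuousAt.continuousWithinAt, hd 0 one_pos⟩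
  have hint : IntervalIntegrable (dslope (fun t : ℝ => Real.log (1 - t)) 0)
      MeasureTheory.volume 0 x := by
    refine (hcont.mono fun t ht => ?_).intervalIntegrable
    rw [Set.uIcc_of_le hx0.le] at ht
    exact lt_of_le_of_lt ht.2 hx1
  refine hint.congr fun t ht => ?_
  rw [Set.uIoc_of_le hx0.le] at ht
  rw [dslope_of_ne _ ht.1.ne', slope_def_field]
  simp

theorem intervalIntegrable_log_one_sub_div_right {x : ℝ} (hx0 : 0 < x) (hx1 : x < 1) :
    IntervalIntegrable (fun t : ℝ => Real.log (1 - t) / t) MeasureTheory.volume x 1 := by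
  have hlog : IntervalIntegrable (fun t : ℝ => Real.log (1 - t)) MeasureTheory.volume x 1 := by
    have := (intervalIntegral.intervalIntegrable_log' (a := 1 - x) (b := 0)).comp_sub_left 1
    simpa using this
  simp only [div_eq_mul_inv]
  refine hlog.mul_continuousOn (continuousOn_inv₀.mono fun t ht => ?_)
  rw [Set.uIcc_of_le hx1.le] at ht
  exact (hx0.trans_le ht.1).ne'

/-- Evaluation of the basic dilogarithmic integral appearing in §5:
for positive reals `a, b, c, d` with `a·d < b·c`,
`−∫_{a/b}^{c/d} (log c + log(1 − (d/c)t))/t dt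
  = Li₂(1) − Li₂(ad/(bc)) + log(c)·log(ad/(bc))`. -/
theorem dilog_integral_eval (a b c d : ℝ)
    (ha : 0 < a) (hb : 0 < b) (hc : 0 < c) (hd : 0 < d) (h : a * d < b * c) :
    -∫ t in (a/b)..(c/d), (Real.log c + Real.log (1 - (d/c) * t)) / t
      = Li2 1 - Li2 (a * d / (b * c)) + Real.log c * Real.log (a * d / (b * c)) := by
  have hx0 : 0 < a * d / (b * c) := by positivity
  have hx1 : a * d / (b * c) < 1 := (div_lt_one (by positivity)).2 h
  have hlow : d / c * (a / b) = a * d / (b * c) := by field_simp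
  have hup : d / c * (c / d) = 1 := by field_simp
  have hsub : ∫ t in (a/b)..(c/d), (Real.log c + Real.log (1 - (d/c) * t)) / t
      = ∫ u in (a * d / (b * c))..1, (Real.log c + Real.log (1 - u)) / u := by
    rw [← hlow, ← hup, ← intervalIntegral.mul_integral_comp_mul_left,
      ← intervalIntegral.integral_const_mul]
    refine intervalIntegral.integral_congr fun t _ => ?_
    -- At `t = 0` both sides are `0` by the convention on division.
    rcases eq_or_ne t 0 with rfl | ht
    · simp
    · field_simp
  rw [hsub]
  generalize a * d / (b * c) = x at hx0 hx1
  have hL := intervalIntegrable_log_one_sub_div_left hx0 hx1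
  have hR := intervalIntegrable_log_one_sub_div_right hx0 hx1
  have h0 : (0 : ℝ) ∉ Set.uIcc x 1 := by
    rw [Set.uIcc_of_le hx1.le]
    exact fun hm => hx0.not_ge hm.1
  have hinv : IntervalIntegrable (fun u : ℝ => Real.log c * u⁻¹) MeasureTheory.volume x 1 :=
    (intervalIntegral.intervalIntegrable_inv (fun u hu hu0 => h0 (hu0 ▸ hu))
      continuousOn_id).const_mul _
  have hsplit : ∫ u in x..1, (Real.log c + Real.log (1 - u)) / u
      = (∫ u in x..1, Real.log c * u⁻¹) + ∫ u in x..1, Real.log (1 - u) / u := by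
    rw [← intervalIntegral.integral_add hinv hR]
    refine intervalIntegral.integral_congr fun u _ => ?_
    simp only [div_eq_mul_inv, add_mul]
  have hadd := intervalIntegral.integral_add_adjacent_intervals hL hR
  rw [hsplit, intervalIntegral.integral_const_mul, integral_inv h0, one_div, Real.log_inv,
    Li2, Li2, ← hadd]
  ring
end

section
/- The vector X = (X₀,…,Xₙ) lies in the kernel of A(λ,σ); explicitly, for every j with 1 ≤ j ≤ n one has λ_j·X_{j−1} + σ_j·( X_j + X_{j+1} + ⋯ + Xₙ ) = 0. -/
/-!
The tail sums of `X` telescope to a closed form,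
`X_j + ⋯ + Xₙ = (-1)^j · λ₁⋯λ_j · ∏_{k=j+1}^{n} (σ_k - λ_k)` (`sum_Xvec_tail`), by downward
induction on `j`: adding `X_j` to the tail from `j + 1` combines `σ_{j+1}` and `-λ_{j+1}` into the
missing factor `σ_{j+1} - λ_{j+1}`. Multiplying the closed form by `σ_j` gives exactly
`-λ_j · X_{j-1}`.
-/

/-- The vector `X₀,…,Xₙ`:
`X_i := (−1)^i · (λ₁⋯λ_i) · σ_{i+1} · ∏_{k=i+2}^{n} (σ_k − λ_k)` for `0 ≤ i ≤ n−1`,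
and `Xₙ := (−1)^n · λ₁⋯λₙ` (empty products equal 1). -/
def Xvec {R : Type*} [CommRing R] (n : ℕ) (lam sig : ℕ → R) (i : ℕ) : R :=
  if i = n then (-1 : R) ^ n * ∏ k ∈ Finset.Icc 1 n, lam k
  else (-1 : R) ^ i * (∏ k ∈ Finset.Icc 1 i, lam k) * sig (i + 1) *
    ∏ k ∈ Finset.Icc (i + 2) n, (sig k - lam k)

theorem sum_Xvec_tail {R : Type*} [CommRing R] (n : ℕ) (lam sig : ℕ → R) (j : ℕ) (hj : j ≤ n) :
    ∑ i ∈ Finset.Icc j n, Xvec n lam sig i =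
      (-1 : R) ^ j * (∏ k ∈ Finset.Icc 1 j, lam k) *
        ∏ k ∈ Finset.Icc (j + 1) n, (sig k - lam k) := by
  induction hj using Nat.decreasingInduction with
  | self => simp [Xvec]
  | @of_succ j hj ih =>
    rw [← Finset.add_sum_Ioc_eq_sum_Icc (by omega : j ≤ n),
      ← Finset.Icc_add_one_left_eq_Ioc, ih, Finset.prod_Icc_succ_top (by omega : 1 ≤ j + 1),
      ← Finset.mul_prod_Ioc_eq_prod_Icc (f := fun k => sig k - lam k) (by omega : j + 1 ≤ n),
      ← Finset.Icc_add_one_left_eq_Ioc, Xvec, if_neg (by omega : j ≠ n)]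
    ring_nf

/-- `X` lies in the kernel of `A(λ,σ)`: for every `1 ≤ j ≤ n`,
`λ_j·X_{j−1} + σ_j·(X_j + X_{j+1} + ⋯ + Xₙ) = 0`. -/
theorem Xvec_mem_ker {R : Type*} [CommRing R] (n : ℕ) (hn : 1 ≤ n) (lam sig : ℕ → R) :
    ∀ j : ℕ, 1 ≤ j → j ≤ n →
      lam j * Xvec n lam sig (j - 1)
        + sig j * ∑ i ∈ Finset.Icc j n, Xvec n lam sig i = 0 := by
  intro j h1 hj
  obtain ⟨m, rfl⟩ := Nat.exists_eq_add_of_le' h1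
  rw [sum_Xvec_tail n lam sig _ hj, Nat.add_sub_cancel, Xvec, if_neg (by omega : m ≠ n),
    Finset.prod_Icc_succ_top (by omega : 1 ≤ m + 1)]
  ring
end

section
/- X₀ + X₁ + ⋯ + Xₙ = ∏_{j=1}^{n} (σ_j − λ_j). (In particular, when σ_j ≠ λ_j for all j, the point [X₀ : ⋯ : Xₙ] ∈ ℙⁿ avoids the hyperplane X₀ + ⋯ + Xₙ = 0.) -/
/-- The interpolating product `(−1)^i · (λ₁⋯λ_i) · ∏_{k=i+1}^{n} (σ_k − λ_k)`, in which the first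
`i` factors `σ_k − λ_k` of the full product are replaced by `−λ_k`. -/
def partialProd {R : Type*} [CommRing R] (n : ℕ) (lam sig : ℕ → R) (i : ℕ) : R :=
  (-1 : R) ^ i * (∏ k ∈ Finset.Icc 1 i, lam k) * ∏ k ∈ Finset.Icc (i + 1) n, (sig k - lam k)

/-- The telescoping identity: it comes from `σ_{i+1} = (σ_{i+1} − λ_{i+1}) + λ_{i+1}`. -/
theorem Xvec_eq_sub {R : Type*} [CommRing R] (n : ℕ) (lam sig : ℕ → R) {i : ℕ} (hi : i < n) :
    Xvec n lam sig i = partialProd n lam sig i - partialProd n lam sig (i + 1) := by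
  have hIoc : Finset.Ioc (i + 1) n = Finset.Icc (i + 2) n := by
    ext k
    simp only [Finset.mem_Ioc, Finset.mem_Icc]
    omega
  have hP : ∏ k ∈ Finset.Icc (i + 1) n, (sig k - lam k)
      = (sig (i + 1) - lam (i + 1)) * ∏ k ∈ Finset.Icc (i + 2) n, (sig k - lam k) := by
    rw [← hIoc]
    exact (Finset.mul_prod_Ioc_eq_prod_Icc (f := fun k => sig k - lam k) hi).symm
  have hL : ∏ k ∈ Finset.Icc 1 (i + 1), lam k = (∏ k ∈ Finset.Icc 1 i, lam k) * lam (i + 1) :=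
    Finset.prod_Icc_succ_top (by omega) lam
  rw [Xvec, if_neg hi.ne, partialProd, partialProd, hP, hL]
  ring

/-- `X₀ + X₁ + ⋯ + Xₙ = ∏_{j=1}^{n} (σ_j − λ_j)`. -/
theorem Xvec_sum {R : Type*} [CommRing R] (n : ℕ) (hn : 1 ≤ n) (lam sig : ℕ → R) :
    ∑ i ∈ Finset.range (n + 1), Xvec n lam sig i
      = ∏ j ∈ Finset.Icc 1 n, (sig j - lam j) := by
  have hlast : Xvec n lam sig n = partialProd n lam sig n := by
    simp [Xvec, partialProd]
  rw [Finset.sum_range_succ, hlast,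
    Finset.sum_congr rfl fun i hi => Xvec_eq_sub n lam sig (Finset.mem_range.mp hi),
    Finset.sum_range_sub', sub_add_cancel]
  simp [partialProd]
end

section
/- Let n ≥ 1 and let x₁,…,xₙ be real numbers. Then x_i > 0 for every i = 1,…,n if and only if x₁ + x₂ + ⋯ + xₙ > 0 and, for every j with 1 ≤ j ≤ n−1, x_j · (x_{j+1} + ⋯ + xₙ) > 0. -/
/-!
Write `S j = x_j + ⋯ + x_n` for the tail sums, so that `S j = x_j + S (j + 1)`. Two real numbers
are both positive exactly when their sum and their product are. Applied to `x_j` and `S (j + 1)`,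
this propagates positivity of the tail sums upwards from `S 1` to `S n = x_n`, and yields
`0 < x_j` at each step.
-/

lemma pos_and_pos_of_add_of_mul {a b : ℝ} (hadd : 0 < a + b) (hmul : 0 < a * b) :
    0 < a ∧ 0 < b := by
  rcases mul_pos_iff.mp hmul with h | h
  · exact h
  · linarith [h.1, h.2]

/-- Positivity of `x₁,…,xₙ` is equivalent to positivity of the total sum together
with positivity of each product `x_j·(x_{j+1} + ⋯ + xₙ)` for `1 ≤ j ≤ n−1`. -/
theorem pos_iff_sum_and_products (n : ℕ) (hn : 1 ≤ n) (x : ℕ → ℝ) :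
    (∀ i : ℕ, 1 ≤ i → i ≤ n → 0 < x i) ↔
      (0 < ∑ i ∈ Finset.Icc 1 n, x i ∧
        ∀ j : ℕ, 1 ≤ j → j ≤ n - 1 → 0 < x j * ∑ i ∈ Finset.Icc (j + 1) n, x i) := by
  constructor
  · intro h
    have tail_pos : ∀ j, 1 ≤ j → j ≤ n → 0 < ∑ i ∈ Finset.Icc j n, x i := by
      intro j hj hjn
      refine Finset.sum_pos (fun i hi => ?_) (Finset.nonempty_Icc.mpr hjn)
      rw [Finset.mem_Icc] at hi
      exact h i (hj.trans hi.1) hi.2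
    exact ⟨tail_pos 1 le_rfl hn, fun j hj hjn =>
      mul_pos (h j hj (by omega)) (tail_pos (j + 1) (by omega) (by omega))⟩
  · rintro ⟨hsum, hprod⟩
    have split : ∀ j, j ≤ n →
        ∑ i ∈ Finset.Icc j n, x i = x j + ∑ i ∈ Finset.Icc (j + 1) n, x i := by
      intro j hj
      rw [← Finset.insert_Icc_add_one_left_eq_Icc hj, Finset.sum_insert (by simp)]
    have tail_pos : ∀ j, 1 ≤ j → j ≤ n → 0 < ∑ i ∈ Finset.Icc j n, x i := by
      intro j hj
      induction j, hj using Nat.le_induction with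
      | base => exact fun _ => hsum
      | succ j hj ih =>
        intro hjn
        have hS := ih (by omega)
        rw [split j (by omega)] at hS
        exact (pos_and_pos_of_add_of_mul hS (hprod j hj (by omega))).2
    intro i hi hin
    have hS := tail_pos i hi hin
    rcases hin.eq_or_lt with rfl | hlt
    · simpa using hS
    · rw [split i hin] at hS
      exact (pos_and_pos_of_add_of_mul hS (hprod i hi (by omega))).1
end

section
/- For every real a > 0 and every x ∈ (0, a), the function F(x) := −Li₃(1 − x/a) + Li₂(1 − x/a)·log(a − x) + (1/2)·log(x/a)·(log(a − x))² is differentiable at x with derivative F′(x) = (log(a − x))² / (2x). -/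
/-- The real trilogarithm `Li₃(x) := ∫₀ˣ Li₂(t)/t dt`. -/
noncomputable def Li3 (x : ℝ) : ℝ := ∫ t in (0:ℝ)..x, Li2 t / t

/-- The fundamental theorem of calculus for `f t / t` when `f` vanishes at `0`. The derivative is
given by `dslope f 0`, the continuous extension of `f t / t`, so that the case `u = 0` is
included; this case is what makes `Li2 t / t` in turn have a removable singularity. -/
theorem hasDerivAt_integral_div {f : ℝ → ℝ} (hf : ContinuousOn f (Set.Iio 1))
    (hd : DifferentiableAt ℝ f 0) (h0 : f 0 = 0) {u : ℝ} (hu : u < 1) :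
    HasDerivAt (fun x : ℝ => ∫ t in (0:ℝ)..x, f t / t) (dslope f 0 u) u := by
  have hcont : ContinuousOn (dslope f 0) (Set.Iio 1) :=
    (continuousOn_dslope (Iio_mem_nhds one_pos)).2 ⟨hf, hd⟩
  have heq : (fun x : ℝ => ∫ t in (0:ℝ)..x, f t / t)
      = fun x : ℝ => ∫ t in (0:ℝ)..x, dslope f 0 t := by
    funext x
    apply intervalIntegral.integral_congr_ae
    -- At `t = 0` the two integrands may differ, since `f 0 / 0 = 0`; a point has measure zero.
    filter_upwards [MeasureTheory.Measure.ae_ne MeasureTheory.volume (0 : ℝ)] with t ht _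
    rw [dslope_of_ne _ ht, slope_def_field, h0, sub_zero, sub_zero]
  rw [heq]
  have hsub : Set.uIcc 0 u ⊆ Set.Iio 1 := fun t ht =>
    lt_of_le_of_lt ht.2 (max_lt one_pos hu)
  exact intervalIntegral.integral_hasDerivAt_right
    ((hcont.mono hsub).intervalIntegrable)
    (hcont.stronglyMeasurableAtFilter isOpen_Iio u hu)
    (hcont.continuousAt (Iio_mem_nhds hu))

theorem hasDerivAt_Li2_dslope {u : ℝ} (hu : u < 1) :
    HasDerivAt Li2 (-dslope (fun t : ℝ => Real.log (1 - t)) 0 u) u := by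
  have hdiff : ∀ t : ℝ, t < 1 → DifferentiableAt ℝ (fun t : ℝ => Real.log (1 - t)) t :=
    fun t ht => ((differentiableAt_const _).sub differentiableAt_id).log (sub_pos.2 ht).ne'
  exact (hasDerivAt_integral_div
    (fun t ht => (hdiff t ht).continuousAt.continuousWithinAt)
    (hdiff 0 one_pos) (by simp) hu).neg

theorem hasDerivAt_Li2_s14 {u : ℝ} (hu0 : u ≠ 0) (hu : u < 1) :
    HasDerivAt Li2 (-(Real.log (1 - u) / u)) u := by
  simpa [dslope_of_ne _ hu0, slope_def_field] using hasDerivAt_Li2_dslope hu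

theorem hasDerivAt_Li3 {u : ℝ} (hu0 : u ≠ 0) (hu : u < 1) :
    HasDerivAt Li3 (Li2 u / u) u := by
  have h0 : Li2 0 = 0 := by simp [Li2]
  have h := hasDerivAt_integral_div
    (fun t ht => (hasDerivAt_Li2_dslope ht).continuousAt.continuousWithinAt)
    (hasDerivAt_Li2_dslope one_pos).differentiableAt h0 hu
  rw [dslope_of_ne _ hu0, slope_def_field, h0, sub_zero, sub_zero] at h
  exact h

/-- For `a > 0` and `x ∈ (0,a)`, the function
`F(x) = −Li₃(1−x/a) + Li₂(1−x/a)·log(a−x) + (1/2)·log(x/a)·log²(a−x)`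
has derivative `log²(a−x)/(2x)` at `x`. -/
theorem hasDerivAt_trilog_primitive (a : ℝ) (ha : 0 < a) (x : ℝ)
    (hx0 : 0 < x) (hxa : x < a) :
    HasDerivAt (fun x : ℝ =>
        -Li3 (1 - x / a) + Li2 (1 - x / a) * Real.log (a - x)
          + (1 / 2) * Real.log (x / a) * (Real.log (a - x)) ^ 2)
      ((Real.log (a - x)) ^ 2 / (2 * x)) x := by
  have hax : a - x ≠ 0 := (sub_pos.2 hxa).ne'
  have hu : 1 - x / a = (a - x) / a := by field_simp
  have hu0 : 1 - x / a ≠ 0 := by rw [hu]; exact div_ne_zero hax ha.ne'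
  have hu1 : 1 - x / a < 1 := sub_lt_self _ (div_pos hx0 ha)
  have hdu : HasDerivAt (fun y : ℝ => 1 - y / a) (-(1 / a)) x :=
    ((hasDerivAt_id x).div_const a).const_sub 1
  have hL : HasDerivAt (fun y : ℝ => Real.log (a - y)) (-1 / (a - x)) x :=
    ((hasDerivAt_id x).const_sub a).log hax
  have hM : HasDerivAt (fun y : ℝ => Real.log (y / a)) (1 / a / (x / a)) x :=
    ((hasDerivAt_id x).div_const a).log (div_pos hx0 ha).ne'
  have h3 := (hasDerivAt_Li3 hu0 hu1).comp x hdu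
  have h2 := (hasDerivAt_Li2_s14 hu0 hu1).comp x hdu
  refine ((h3.neg.add (h2.mul hL)).add ((hM.const_mul (1 / 2)).mul (hL.pow 2))).congr_deriv ?_
  simp only [Function.comp_apply, Pi.pow_apply, sub_sub_cancel]
  -- The values of `Li2` and `log` are atoms for the algebra; only the bare `1 - x / a` is rewritten.
  generalize Li2 (1 - x / a) = D
  generalize Real.log (x / a) = M
  generalize Real.log (a - x) = L
  rw [hu]
  field_simp
  ring
end
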